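/- Let L be a Tonelli Lagrangian on a metric graph G. There exists a real number c, independent of x and y, such that: (1) for every k > c and all x, y ∈ G, liminf_{t→∞} (h_t(x,y) + kt) = +∞; (2) for every k < c and all x, y ∈ G, liminf_{t→∞} (h_t(x,y) + kt) = −∞; (3) for all x, y ∈ G, liminf_{t→∞} (h_t(x,y) + ct) is finite. -/

import Mathlib

/-!
The critical value comes from an almost-additivity argument; neither minimizers nor continuity
of `h_t` are needed.

The Lagrangian is uniformly bounded below (`exists_lower_bound`), so every action over time `t` is
at least `-B t`. The graph is connected, hence any two points are joined by a chain of at most `N`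
edges; traversing each of them at constant speed in unit time joins any two points in time `N` with
action at most `A N` (`actionSet_chain`), and staying at a point costs at most `A` per unit of
time. Curves can be concatenated and cut, and actions add (`actionSet_concat`, `actionSet_split`).

Dropping the last time `2N` of a curve and inserting connections at both ends moves its endpoints
at bounded cost, so for `t ≥ 2N` all the `h_t(x, y)` differ by at most a constant `D`. For a fixed
`x₀`, the function `g(t) = h_t(x₀, x₀)` is then subadditive by concatenation, and superadditive up to
`2D` by cutting. Therefore `(g(s) - 2D)/s ≤ g(t)/t` for all large `s` and `t` (`rate_le_rate`), and
with `-c` the supremum of the left side, `g(t) + c t` lies in `[0, 2D]`. Thus `h_t(x, y) + c t` is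
bounded uniformly in `x`, `y` and `t ≥ 2N` (`exists_linear_rate`), which gives the three
asymptotic regimes at once (`isCriticalValue_of_bound`).
-/

open Filter Set

/-- A compact metric graph: finitely many edges parametrized by arc length,
whose distance is the minimal length of unit-speed paths. -/
structure MetricGraph where
  G : Type
  [ms : MetricSpace G]
  [cs : CompactSpace G]
  E : Type
  [fE : Fintype E]
  [neE : Nonempty E]
  len : E → ℝ
  len_pos : ∀ j, 0 < len j
  σ : E → ℝ → G
  σ_lip : ∀ j, ∀ s ∈ Set.Icc (0:ℝ) (len j), ∀ t ∈ Set.Icc (0:ℝ) (len j),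
    dist (σ j s) (σ j t) ≤ |s - t|
  σ_inj : ∀ j, Set.InjOn (σ j) (Set.Icc 0 (len j))
  cover : ∀ x : G, ∃ j, ∃ s ∈ Set.Icc (0:ℝ) (len j), σ j s = x
  interiors_disjoint : ∀ i j, ∀ s ∈ Set.Ioo (0:ℝ) (len i), ∀ t ∈ Set.Ioo (0:ℝ) (len j),
    σ i s = σ j t → i = j
  path_dist : ∀ x y : G, dist x y =
    sInf {T : ℝ | 0 ≤ T ∧ ∃ γ : ℝ → G, γ 0 = x ∧ γ T = y ∧ LipschitzOnWith 1 γ (Set.Icc 0 T)}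
  path_exists : ∀ x y : G, ∃ T : ℝ, 0 ≤ T ∧ ∃ γ : ℝ → G, γ 0 = x ∧ γ T = y ∧
    LipschitzOnWith 1 γ (Set.Icc 0 T)

attribute [instance] MetricGraph.ms MetricGraph.cs MetricGraph.fE MetricGraph.neE

open MeasureTheory

namespace MetricGraph

/-- The vertex set: endpoints of edges. -/
def vertexSet (Γ : MetricGraph) : Set Γ.G :=
  {x | ∃ j, x = Γ.σ j 0 ∨ x = Γ.σ j (Γ.len j)}

/-- The curve `γ` has (edgewise) derivative `v` at time `t`: either `γ t` is a vertex,
`v = 0` and `d(γ s, γ t) = o(|s-t|)`, or `γ t` lies in the interior of an edge and `v`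
is the derivative of the edge coordinate of `γ` at `t`. -/
def HasGDerivAt (Γ : MetricGraph) (γ : ℝ → Γ.G) (t v : ℝ) : Prop :=
  (γ t ∈ Γ.vertexSet ∧ v = 0 ∧
    ∀ ε : ℝ, 0 < ε → ∃ δ : ℝ, 0 < δ ∧ ∀ s : ℝ, |s - t| < δ → dist (γ s) (γ t) ≤ ε * |s - t|) ∨
  (γ t ∉ Γ.vertexSet ∧ ∃ j : Γ.E, ∃ f : ℝ → ℝ,
    (∀ᶠ s in nhds t, Γ.σ j (f s) = γ s) ∧ (∀ᶠ s in nhds t, f s ∈ Set.Icc 0 (Γ.len j)) ∧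
    HasDerivAt f v t)

/-- The (edgewise) derivative of a curve, defined by choice where it exists, `0` elsewhere. -/
noncomputable def gderiv (Γ : MetricGraph) (γ : ℝ → Γ.G) (t : ℝ) : ℝ :=
  letI := Classical.dec (∃ v, Γ.HasGDerivAt γ t v)
  if h : ∃ v, Γ.HasGDerivAt γ t v then h.choose else 0

/-- Absolute continuity of a curve `γ : [a,b] → G`. -/
def AbsContOn (Γ : MetricGraph) (a b : ℝ) (γ : ℝ → Γ.G) : Prop :=
  ∀ ε : ℝ, 0 < ε → ∃ δ : ℝ, 0 < δ ∧ ∀ n : ℕ, ∀ c d : Fin n → ℝ,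
    (∀ i, c i ∈ Set.Icc a b ∧ d i ∈ Set.Icc a b ∧ c i ≤ d i) →
    ((Set.univ : Set (Fin n)).PairwiseDisjoint fun i => Set.Ioo (c i) (d i)) →
    (∑ i, (d i - c i)) < δ →
    (∑ i, dist (γ (c i)) (γ (d i))) < ε

/-- A function on `G` is `C¹` near a vertex `e` if its pullback to every edge
containing `e` is `C¹` near the coordinate of `e`. -/
def C1AtVertex (Γ : MetricGraph) (ψ : Γ.G → ℝ) (e : Γ.G) : Prop :=
  ∀ j, ∀ s ∈ Set.Icc (0:ℝ) (Γ.len j), Γ.σ j s = e →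
    ∃ δ : ℝ, 0 < δ ∧ ContDiffOn ℝ 1 (fun τ => ψ (Γ.σ j τ))
      (Set.Icc 0 (Γ.len j) ∩ Set.Ioo (s - δ) (s + δ))

/-- A function on `G × ℝ` is `C¹` near `(e, t)` with `e` a vertex. -/
def C1AtVertexT (Γ : MetricGraph) (ψ : Γ.G → ℝ → ℝ) (e : Γ.G) (t : ℝ) : Prop :=
  ∀ j, ∀ s ∈ Set.Icc (0:ℝ) (Γ.len j), Γ.σ j s = e →
    ∃ δ : ℝ, 0 < δ ∧ ContDiffOn ℝ 1 (fun q : ℝ × ℝ => ψ (Γ.σ j q.1) q.2)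
      ((Set.Icc 0 (Γ.len j) ∩ Set.Ioo (s - δ) (s + δ)) ×ˢ Set.Ioo (t - δ) (t + δ))

end MetricGraph

/-- A Tonelli Lagrangian on a metric graph: edgewise `C²`, strictly convex and
superlinear in the velocity, consistent at the vertices. -/
structure TonelliLagrangian (Γ : MetricGraph) where
  L : Γ.E → ℝ → ℝ → ℝ
  smooth : ∀ j, ContDiffOn ℝ 2 (fun p : ℝ × ℝ => L j p.1 p.2)
    (Set.Icc 0 (Γ.len j) ×ˢ (Set.univ : Set ℝ))
  strictconv : ∀ j, ∀ x ∈ Set.Icc (0:ℝ) (Γ.len j), StrictConvexOn ℝ (Set.univ : Set ℝ) (L j x)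
  superlinear : ∀ j, ∀ x ∈ Set.Icc (0:ℝ) (Γ.len j), ∀ C : ℝ, ∃ D : ℝ, ∀ v : ℝ,
    C * |v| - D ≤ L j x v
  vertex_consistent : ∀ i j, ∀ s ∈ Set.Icc (0:ℝ) (Γ.len i), ∀ t ∈ Set.Icc (0:ℝ) (Γ.len j),
    Γ.σ i s = Γ.σ j t → L i s 0 = L j t 0

namespace TonelliLagrangian

variable {Γ : MetricGraph}

/-- The value of the Lagrangian at a point of `G` (via a choice of edge containing it). -/
noncomputable def lagOf (Λ : TonelliLagrangian Γ) (x : Γ.G) (v : ℝ) : ℝ :=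
  Λ.L (Γ.cover x).choose (Γ.cover x).choose_spec.choose v

/-- The velocity partial derivative `∂_v L` at a point of `G`. -/
noncomputable def lagVOf (Λ : TonelliLagrangian Γ) (x : Γ.G) (v : ℝ) : ℝ :=
  deriv (fun w => Λ.L (Γ.cover x).choose (Γ.cover x).choose_spec.choose w) v

/-- The action of a curve `γ : [a,b] → G`. -/
noncomputable def action (Λ : TonelliLagrangian Γ) (a b : ℝ) (γ : ℝ → Γ.G) : ℝ :=
  ∫ t in a..b, Λ.lagOf (γ t) (Γ.gderiv γ t)

/-- The integrand of the action is integrable (i.e. the action is finite). -/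
def ActionIntegrableOn (Λ : TonelliLagrangian Γ) (a b : ℝ) (γ : ℝ → Γ.G) : Prop :=
  IntegrableOn (fun t => Λ.lagOf (γ t) (Γ.gderiv γ t)) (Set.Icc a b)

/-- An action minimizer with fixed endpoints. -/
def Minimizer (Λ : TonelliLagrangian Γ) (a b : ℝ) (γ : ℝ → Γ.G) : Prop :=
  Γ.AbsContOn a b γ ∧ Λ.ActionIntegrableOn a b γ ∧
  ∀ α : ℝ → Γ.G, Γ.AbsContOn a b α → Λ.ActionIntegrableOn a b α →
    α a = γ a → α b = γ b → Λ.action a b γ ≤ Λ.action a b α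

/-- `h_t(x,y)`: minimal action among absolutely continuous curves from `x` to `y` in time `t`. -/
noncomputable def ht (Λ : TonelliLagrangian Γ) (t : ℝ) (x y : Γ.G) : ℝ :=
  sInf {r | ∃ γ : ℝ → Γ.G, Γ.AbsContOn 0 t γ ∧ γ 0 = x ∧ γ t = y ∧
    Λ.ActionIntegrableOn 0 t γ ∧ r = Λ.action 0 t γ}

/-- `c` is the critical value of the Lagrangian. -/
def IsCriticalValue (Λ : TonelliLagrangian Γ) (c : ℝ) : Prop :=
  (∀ k : ℝ, c < k → ∀ x y : Γ.G,
    Filter.liminf (fun t : ℝ => ((Λ.ht t x y + k * t : ℝ) : EReal)) Filter.atTop = ⊤) ∧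
  (∀ k : ℝ, k < c → ∀ x y : Γ.G,
    Filter.liminf (fun t : ℝ => ((Λ.ht t x y + k * t : ℝ) : EReal)) Filter.atTop = ⊥) ∧
  (∀ x y : Γ.G, ∃ r : ℝ,
    Filter.liminf (fun t : ℝ => ((Λ.ht t x y + c * t : ℝ) : EReal)) Filter.atTop = (r : EReal))

/-- The Peierls barrier `h(x,y) = liminf_{t→∞} (h_t(x,y) + ct)`. -/
noncomputable def peierls (Λ : TonelliLagrangian Γ) (c : ℝ) (x y : Γ.G) : ℝ :=
  (Filter.liminf (fun t : ℝ => ((Λ.ht t x y + c * t : ℝ) : EReal)) Filter.atTop).toReal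

/-- The Mañé potential `Φ(x,y) = inf_{t>0} (h_t(x,y) + ct)`. -/
noncomputable def mane (Λ : TonelliLagrangian Γ) (c : ℝ) (x y : Γ.G) : ℝ :=
  sInf {r | ∃ t : ℝ, 0 < t ∧ r = Λ.ht t x y + c * t}

/-- The Aubry set: points with `h(x,x) = 0`. -/
def aubrySet (Λ : TonelliLagrangian Γ) (c : ℝ) : Set Γ.G :=
  {x | Λ.peierls c x x = 0}

/-- A dominated function: `u(y) - u(x) ≤ h_t(x,y) + ct`. -/
def Dominated (Λ : TonelliLagrangian Γ) (c : ℝ) (u : Γ.G → ℝ) : Prop :=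
  ∀ x y : Γ.G, ∀ t : ℝ, 0 < t → u y - u x ≤ Λ.ht t x y + c * t

/-- The curve `γ` calibrates the function `u` on the time interval `J`. -/
def Calibrates (Λ : TonelliLagrangian Γ) (c : ℝ) (J : Set ℝ) (γ : ℝ → Γ.G)
    (u : Γ.G → ℝ) : Prop :=
  ∀ t ∈ J, ∀ s ∈ J, t ≤ s → Λ.ActionIntegrableOn t s γ ∧
    u (γ s) - u (γ t) = Λ.action t s γ + c * (s - t)

/-- Backward weak KAM solution. -/
def BackwardWeakKAM (Λ : TonelliLagrangian Γ) (c : ℝ) (u : Γ.G → ℝ) : Prop :=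
  Continuous u ∧ Λ.Dominated c u ∧
  ∀ x : Γ.G, ∃ γ : ℝ → Γ.G, γ 0 = x ∧ (∀ a : ℝ, a ≤ 0 → Γ.AbsContOn a 0 γ) ∧
    Λ.Calibrates c (Set.Iic 0) γ u

/-- Forward weak KAM solution. -/
def ForwardWeakKAM (Λ : TonelliLagrangian Γ) (c : ℝ) (u : Γ.G → ℝ) : Prop :=
  Continuous u ∧ Λ.Dominated c u ∧
  ∀ x : Γ.G, ∃ γ : ℝ → Γ.G, γ 0 = x ∧ (∀ b : ℝ, 0 ≤ b → Γ.AbsContOn 0 b γ) ∧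
    Λ.Calibrates c (Set.Ici 0) γ u

/-- Semi-static curve on a time interval `J`. -/
def SemiStatic (Λ : TonelliLagrangian Γ) (c : ℝ) (J : Set ℝ) (η : ℝ → Γ.G) : Prop :=
  ∀ t ∈ J, ∀ s ∈ J, t ≤ s → Λ.ActionIntegrableOn t s η ∧
    Λ.mane c (η t) (η s) = Λ.action t s η + c * (s - t)

/-- The Lax–Oleinik semigroup `(ℒ_t f)(x) = inf_y (f(y) + h_t(y,x))`. -/
noncomputable def lax (Λ : TonelliLagrangian Γ) (t : ℝ) (f : Γ.G → ℝ) (x : Γ.G) : ℝ :=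
  ⨅ y : Γ.G, (f y + Λ.ht t y x)

/-- The Lagrangian is symmetric at the vertices. -/
def SymmetricAtVertices (Λ : TonelliLagrangian Γ) : Prop :=
  ∀ e ∈ Γ.vertexSet, ∃ lam : ℝ → ℝ, ∀ j, ∀ s ∈ Set.Icc (0:ℝ) (Γ.len j),
    Γ.σ j s = e → ∀ z : ℝ, Λ.L j s z = lam |z|

/-- The Hamiltonian `H_j(x,p)`, where at the endpoints of the edge only
incoming-or-zero velocities are used. -/
noncomputable def ham (Λ : TonelliLagrangian Γ) (j : Γ.E) (x p : ℝ) : ℝ :=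
  sSup {r | ∃ z : ℝ, ((x = 0 → 0 ≤ z) ∧ (x = Γ.len j → z ≤ 0)) ∧ r = -p * z - Λ.L j x z}

/-- Viscosity subsolution of `H(x, Du) = c` on the graph. -/
def ViscositySubsolution (Λ : TonelliLagrangian Γ) (c : ℝ) (u : Γ.G → ℝ) : Prop :=
  Continuous u ∧
  (∀ j : Γ.E, ∀ s ∈ Set.Ioo (0:ℝ) (Γ.len j), Γ.σ j s ∉ Γ.vertexSet →
    ∀ (φ : ℝ → ℝ) (p : ℝ), HasDerivAt φ p s →
      IsLocalMax (fun τ => u (Γ.σ j τ) - φ τ) s → Λ.ham j s p ≤ c) ∧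
  (∀ e ∈ Γ.vertexSet, ∀ ψ : Γ.G → ℝ, MetricGraph.C1AtVertex Γ ψ e →
    (∃ ε : ℝ, 0 < ε ∧ ∀ x : Γ.G, dist x e < ε → u x - ψ x ≤ u e - ψ e) →
    ∀ j : Γ.E, ∀ s ∈ Set.Icc (0:ℝ) (Γ.len j), Γ.σ j s = e →
    ∀ p : ℝ, HasDerivWithinAt (fun τ => ψ (Γ.σ j τ)) p (Set.Icc 0 (Γ.len j)) s →
      Λ.ham j s p ≤ c)

/-- Viscosity supersolution of `H(x, Du) = c` on the graph. -/
def ViscositySupersolution (Λ : TonelliLagrangian Γ) (c : ℝ) (u : Γ.G → ℝ) : Prop :=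
  Continuous u ∧
  (∀ j : Γ.E, ∀ s ∈ Set.Ioo (0:ℝ) (Γ.len j), Γ.σ j s ∉ Γ.vertexSet →
    ∀ (φ : ℝ → ℝ) (p : ℝ), HasDerivAt φ p s →
      IsLocalMin (fun τ => u (Γ.σ j τ) - φ τ) s → c ≤ Λ.ham j s p) ∧
  (∀ e ∈ Γ.vertexSet, ∀ ψ : Γ.G → ℝ, MetricGraph.C1AtVertex Γ ψ e →
    (∃ ε : ℝ, 0 < ε ∧ ∀ x : Γ.G, dist x e < ε → u e - ψ e ≤ u x - ψ x) →
    ∃ j : Γ.E, ∃ s ∈ Set.Icc (0:ℝ) (Γ.len j), Γ.σ j s = e ∧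
      ∃ p : ℝ, HasDerivWithinAt (fun τ => ψ (Γ.σ j τ)) p (Set.Icc 0 (Γ.len j)) s ∧
      c ≤ Λ.ham j s p)

/-- Viscosity subsolution of `u_t + H(x, D_x u) = 0` on `G × (0,T]`. -/
def EvoSubsolution (Λ : TonelliLagrangian Γ) (T : ℝ) (u : Γ.G → ℝ → ℝ) : Prop :=
  Continuous (fun q : Γ.G × ℝ => u q.1 q.2) ∧
  (∀ j : Γ.E, ∀ s ∈ Set.Ioo (0:ℝ) (Γ.len j), Γ.σ j s ∉ Γ.vertexSet →
    ∀ t ∈ Set.Ioc (0:ℝ) T, ∀ (φ : ℝ → ℝ → ℝ) (p q : ℝ),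
      HasDerivAt (fun τ => φ τ t) p s → HasDerivAt (fun r => φ s r) q t →
      (∃ ε : ℝ, 0 < ε ∧ ∀ τ r : ℝ, |τ - s| < ε → |r - t| < ε →
        u (Γ.σ j τ) r - φ τ r ≤ u (Γ.σ j s) t - φ s t) →
      q + Λ.ham j s p ≤ 0) ∧
  (∀ e ∈ Γ.vertexSet, ∀ t ∈ Set.Ioc (0:ℝ) T, ∀ ψ : Γ.G → ℝ → ℝ,
    MetricGraph.C1AtVertexT Γ ψ e t →
    (∃ ε : ℝ, 0 < ε ∧ ∀ x : Γ.G, ∀ r : ℝ, dist x e < ε → |r - t| < ε →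
      u x r - ψ x r ≤ u e t - ψ e t) →
    ∀ q : ℝ, HasDerivAt (fun r => ψ e r) q t →
    ∀ j : Γ.E, ∀ s ∈ Set.Icc (0:ℝ) (Γ.len j), Γ.σ j s = e →
    ∀ p : ℝ, HasDerivWithinAt (fun τ => ψ (Γ.σ j τ) t) p (Set.Icc 0 (Γ.len j)) s →
      q + Λ.ham j s p ≤ 0)

/-- Viscosity supersolution of `u_t + H(x, D_x u) = 0` on `G × (0,T]`. -/
def EvoSupersolution (Λ : TonelliLagrangian Γ) (T : ℝ) (u : Γ.G → ℝ → ℝ) : Prop :=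
  Continuous (fun q : Γ.G × ℝ => u q.1 q.2) ∧
  (∀ j : Γ.E, ∀ s ∈ Set.Ioo (0:ℝ) (Γ.len j), Γ.σ j s ∉ Γ.vertexSet →
    ∀ t ∈ Set.Ioc (0:ℝ) T, ∀ (φ : ℝ → ℝ → ℝ) (p q : ℝ),
      HasDerivAt (fun τ => φ τ t) p s → HasDerivAt (fun r => φ s r) q t →
      (∃ ε : ℝ, 0 < ε ∧ ∀ τ r : ℝ, |τ - s| < ε → |r - t| < ε →
        u (Γ.σ j s) t - φ s t ≤ u (Γ.σ j τ) r - φ τ r) →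
      0 ≤ q + Λ.ham j s p) ∧
  (∀ e ∈ Γ.vertexSet, ∀ t ∈ Set.Ioc (0:ℝ) T, ∀ ψ : Γ.G → ℝ → ℝ,
    MetricGraph.C1AtVertexT Γ ψ e t →
    (∃ ε : ℝ, 0 < ε ∧ ∀ x : Γ.G, ∀ r : ℝ, dist x e < ε → |r - t| < ε →
      u e t - ψ e t ≤ u x r - ψ x r) →
    ∀ q : ℝ, HasDerivAt (fun r => ψ e r) q t →
    ∃ j : Γ.E, ∃ s ∈ Set.Icc (0:ℝ) (Γ.len j), Γ.σ j s = e ∧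
      ∃ p : ℝ, HasDerivWithinAt (fun τ => ψ (Γ.σ j τ) t) p (Set.Icc 0 (Γ.len j)) s ∧
      0 ≤ q + Λ.ham j s p)

end TonelliLagrangian

namespace MetricGraph

variable {Γ : MetricGraph}

/-! ### The edgewise derivative -/

theorem hasGDerivAt_congr {γ γ' : ℝ → Γ.G} {t : ℝ} (h : γ =ᶠ[nhds t] γ') (v : ℝ) :
    Γ.HasGDerivAt γ t v → Γ.HasGDerivAt γ' t v := by
  have ht : γ t = γ' t := h.eq_of_nhds
  rintro (⟨h1, h2, h3⟩ | ⟨h1, j, f, h2, h3, h4⟩)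
  · refine Or.inl ⟨ht ▸ h1, h2, fun ε hε => ?_⟩
    obtain ⟨δ, hδ, h5⟩ := h3 ε hε
    obtain ⟨δ', hδ', h6⟩ := Metric.eventually_nhds_iff.1 h
    refine ⟨min δ δ', lt_min hδ hδ', fun s hs => ?_⟩
    have h7 : γ s = γ' s := h6 (by rw [Real.dist_eq]; exact lt_of_lt_of_le hs (min_le_right _ _))
    rw [← h7, ← ht]
    exact h5 s (lt_of_lt_of_le hs (min_le_left _ _))
  · refine Or.inr ⟨ht ▸ h1, j, f, ?_, h3, h4⟩
    filter_upwards [h, h2] with s hs hs2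
    rw [hs2, hs]

theorem hasGDerivAt_shift {γ : ℝ → Γ.G} {t : ℝ} (s : ℝ) (v : ℝ) :
    Γ.HasGDerivAt γ (t + s) v → Γ.HasGDerivAt (fun u => γ (u + s)) t v := by
  have hc : Tendsto (fun u : ℝ => u + s) (nhds t) (nhds (t + s)) :=
    (continuous_id.add continuous_const).tendsto t
  rintro (⟨h1, h2, h3⟩ | ⟨h1, j, f, h2, h3, h4⟩)
  · refine Or.inl ⟨h1, h2, fun ε hε => ?_⟩
    obtain ⟨δ, hδ, h5⟩ := h3 ε hε
    refine ⟨δ, hδ, fun u hu => ?_⟩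
    have := h5 (u + s) (by simpa using hu)
    simpa using this
  · refine Or.inr ⟨h1, j, fun u => f (u + s), hc.eventually h2, hc.eventually h3, ?_⟩
    exact HasDerivAt.comp_add_const t s h4

/-- `gderiv` is chosen from the set of edgewise derivatives, so it only depends on this set. -/
theorem gderiv_eq_of_iff {γ γ' : ℝ → Γ.G} {t t' : ℝ}
    (h : ∀ v, Γ.HasGDerivAt γ t v ↔ Γ.HasGDerivAt γ' t' v) :
    Γ.gderiv γ t = Γ.gderiv γ' t' := by
  have : (fun v => Γ.HasGDerivAt γ t v) = fun v => Γ.HasGDerivAt γ' t' v :=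
    funext fun v => propext (h v)
  unfold gderiv
  have key : ∀ P Q : ℝ → Prop, P = Q →
      (letI := Classical.dec (∃ v, P v); if h : ∃ v, P v then h.choose else 0) =
      (letI := Classical.dec (∃ v, Q v); if h : ∃ v, Q v then h.choose else 0) := by
    rintro P Q rfl; rfl
  exact key _ _ this

theorem gderiv_congr {γ γ' : ℝ → Γ.G} {t : ℝ} (h : γ =ᶠ[nhds t] γ') :
    Γ.gderiv γ t = Γ.gderiv γ' t :=
  gderiv_eq_of_iff fun v => ⟨hasGDerivAt_congr h v, hasGDerivAt_congr h.symm v⟩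

theorem gderiv_shift (γ : ℝ → Γ.G) (s t : ℝ) :
    Γ.gderiv (fun u => γ (u + s)) t = Γ.gderiv γ (t + s) := by
  refine gderiv_eq_of_iff fun v => ⟨fun h => ?_, hasGDerivAt_shift s v⟩
  have h' : Γ.HasGDerivAt (fun u => γ (u + s)) ((t + s) + -s) v := by simpa using h
  simpa using hasGDerivAt_shift (-s) v h'

/-- Outside the vertices, the edge through a point and its arc length coordinate are unique. -/
theorem coord_unique {i j : Γ.E} {s t : ℝ} (hs : s ∈ Icc 0 (Γ.len i)) (ht : t ∈ Icc 0 (Γ.len j))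
    (h : Γ.σ i s = Γ.σ j t) (hv : Γ.σ i s ∉ Γ.vertexSet) : i = j ∧ s = t := by
  have key : ∀ k u, u ∈ Icc 0 (Γ.len k) → Γ.σ k u ∉ Γ.vertexSet → u ∈ Ioo 0 (Γ.len k) := by
    intro k u hu hn
    refine ⟨lt_of_le_of_ne hu.1 ?_, lt_of_le_of_ne hu.2 ?_⟩
    · rintro rfl; exact hn ⟨k, Or.inl rfl⟩
    · rintro rfl; exact hn ⟨k, Or.inr rfl⟩
  obtain rfl := Γ.interiors_disjoint i j s (key i s hs hv) t (key j t ht (h ▸ hv)) h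
  exact ⟨rfl, Γ.σ_inj i hs ht h⟩

theorem hasGDerivAt_unique {γ : ℝ → Γ.G} {t v w : ℝ} (hv : Γ.HasGDerivAt γ t v)
    (hw : Γ.HasGDerivAt γ t w) : v = w := by
  rcases hv with ⟨h1, h2, -⟩ | ⟨h1, j, f, h2, h3, h4⟩ <;>
    rcases hw with ⟨k1, k2, -⟩ | ⟨k1, i, g, k2, k3, k4⟩
  · rw [h2, k2]
  · exact absurd h1 k1
  · exact absurd k1 h1
  · have e1 := h2.self_of_nhds
    have e2 := k2.self_of_nhds
    obtain ⟨rfl, -⟩ := coord_unique h3.self_of_nhds k3.self_of_nhds (e1.trans e2.symm) (e1 ▸ h1)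
    refine h4.unique (k4.congr_of_eventuallyEq ?_)
    filter_upwards [h2, h3, k2, k3] with s a b c d
    exact Γ.σ_inj j b d (a.trans c.symm)

theorem gderiv_eq {γ : ℝ → Γ.G} {t v : ℝ} (h : Γ.HasGDerivAt γ t v) : Γ.gderiv γ t = v := by
  have hex : ∃ v, Γ.HasGDerivAt γ t v := ⟨v, h⟩
  unfold gderiv
  rw [dif_pos hex]
  exact hasGDerivAt_unique hex.choose_spec h

theorem hasGDerivAt_const (x : Γ.G) (t : ℝ) : Γ.HasGDerivAt (fun _ => x) t 0 := by
  by_cases hx : x ∈ Γ.vertexSet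
  · exact Or.inl ⟨hx, rfl, fun ε hε => ⟨1, one_pos, fun s _ => by
      rw [dist_self]; positivity⟩⟩
  · obtain ⟨j, s, hs, rfl⟩ := Γ.cover x
    exact Or.inr ⟨hx, j, fun _ => s, Eventually.of_forall fun _ => rfl,
      Eventually.of_forall fun _ => hs, hasDerivAt_const t s⟩

theorem vertexSet_finite (Γ : MetricGraph) : Γ.vertexSet.Finite := by
  have : Γ.vertexSet ⊆ range (fun j => Γ.σ j 0) ∪ range (fun j => Γ.σ j (Γ.len j)) := by
    rintro x ⟨j, rfl | rfl⟩
    · exact Or.inl ⟨j, rfl⟩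
    · exact Or.inr ⟨j, rfl⟩
  exact ((finite_range _).union (finite_range _)).subset this

/-! ### Absolutely continuous curves -/

theorem AbsContOn.mono {a b a' b' : ℝ} {γ : ℝ → Γ.G} (h : Γ.AbsContOn a b γ) (ha : a ≤ a')
    (hb : b' ≤ b) : Γ.AbsContOn a' b' γ := by
  intro ε hε
  obtain ⟨δ, hδ, H⟩ := h ε hε
  refine ⟨δ, hδ, fun n c d h1 h2 h3 => H n c d (fun i => ?_) h2 h3⟩
  obtain ⟨⟨p, q⟩, ⟨r, s⟩, u⟩ := h1 i
  exact ⟨⟨ha.trans p, q.trans hb⟩, ⟨ha.trans r, s.trans hb⟩, u⟩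

theorem AbsContOn.congr {a b : ℝ} {γ γ' : ℝ → Γ.G} (h : Γ.AbsContOn a b γ)
    (he : ∀ u ∈ Icc a b, γ u = γ' u) : Γ.AbsContOn a b γ' := by
  intro ε hε
  obtain ⟨δ, hδ, H⟩ := h ε hε
  refine ⟨δ, hδ, fun n c d h1 h2 h3 => ?_⟩
  convert H n c d h1 h2 h3 using 3 with i
  · exact (he _ (h1 i).1).symm
  · exact (he _ (h1 i).2.1).symm

theorem AbsContOn.shift {a b : ℝ} {γ : ℝ → Γ.G} (s : ℝ) (h : Γ.AbsContOn (a + s) (b + s) γ) :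
    Γ.AbsContOn a b (fun u => γ (u + s)) := by
  intro ε hε
  obtain ⟨δ, hδ, H⟩ := h ε hε
  refine ⟨δ, hδ, fun n c d h1 h2 h3 => ?_⟩
  refine H n (fun i => c i + s) (fun i => d i + s) (fun i => ?_) ?_ (by simpa using h3)
  · obtain ⟨⟨p, q⟩, ⟨r, s⟩, u⟩ := h1 i
    exact ⟨⟨by linarith, by linarith⟩, ⟨by linarith, by linarith⟩, by linarith⟩
  · intro i hi j hj hij
    have := h2 hi hj hij
    simp only [Function.onFun, Set.disjoint_left, mem_Ioo] at this ⊢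
    intro x hx hx'
    exact this (a := x - s) ⟨by linarith, by linarith⟩ ⟨by linarith, by linarith⟩

theorem AbsContOn.glue {a m b : ℝ} {γ : ℝ → Γ.G} (ham : a ≤ m) (hmb : m ≤ b)
    (h1 : Γ.AbsContOn a m γ) (h2 : Γ.AbsContOn m b γ) : Γ.AbsContOn a b γ := by
  intro ε hε
  obtain ⟨δ₁, hδ₁, H1⟩ := h1 (ε / 2) (by positivity)
  obtain ⟨δ₂, hδ₂, H2⟩ := h2 (ε / 2) (by positivity)
  refine ⟨min δ₁ δ₂, lt_min hδ₁ hδ₂, fun n c d h1 h2 h3 => ?_⟩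
  -- Each interval is cut at `m`; a piece on the wrong side degenerates to the point `m`.
  have A := H1 n (fun i => min (c i) m) (fun i => min (d i) m) (fun i => ?_) ?_ ?_
  have B := H2 n (fun i => max (c i) m) (fun i => max (d i) m) (fun i => ?_) ?_ ?_
  · have hle : ∑ i, dist (γ (c i)) (γ (d i)) ≤
        ∑ i, dist (γ (min (c i) m)) (γ (min (d i) m)) +
        ∑ i, dist (γ (max (c i) m)) (γ (max (d i) m)) := by
      rw [← Finset.sum_add_distrib]
      refine Finset.sum_le_sum fun i _ => ?_
      have hcd := (h1 i).2.2
      rcases le_total (d i) m with hd | hd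
      · rw [min_eq_left hd, min_eq_left (hcd.trans hd), max_eq_right hd,
          max_eq_right (hcd.trans hd)]
        simp
      · rcases le_total (c i) m with hc | hc
        · rw [min_eq_left hc, min_eq_right hd, max_eq_right hc, max_eq_left hd]
          exact dist_triangle _ _ _
        · rw [min_eq_right hc, min_eq_right hd, max_eq_left hc, max_eq_left hd]
          simp
    linarith
  · obtain ⟨⟨p, q⟩, ⟨r, s⟩, u⟩ := h1 i
    exact ⟨⟨le_max_right _ _, max_le q hmb⟩, ⟨le_max_right _ _, max_le s hmb⟩,
      max_le_max u le_rfl⟩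
  · intro i hi j hj hij
    refine (h2 hi hj hij).mono ?_ ?_ <;>
    · rintro x ⟨hx, hx'⟩
      rw [max_lt_iff] at hx
      rcases lt_max_iff.1 hx' with h | h
      · exact ⟨hx.1, h⟩
      · linarith
  · refine lt_of_le_of_lt (Finset.sum_le_sum fun i _ => ?_) (lt_of_lt_of_le h3 (min_le_right _ _))
    have hcd := (h1 i).2.2
    rcases le_total (d i) m with hd | hd <;> rcases le_total (c i) m with hc | hc <;>
      simp only [hd, hc, max_eq_left, max_eq_right] <;> linarith
  · obtain ⟨⟨p, q⟩, ⟨r, s⟩, u⟩ := h1 i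
    exact ⟨⟨le_min p ham, min_le_right _ _⟩, ⟨le_min r ham, min_le_right _ _⟩,
      min_le_min u le_rfl⟩
  · intro i hi j hj hij
    refine (h2 hi hj hij).mono ?_ ?_ <;>
    · rintro x ⟨hx, hx'⟩
      rw [lt_min_iff] at hx'
      rcases min_lt_iff.1 hx with h | h
      · exact ⟨h, hx'.1⟩
      · linarith
  · refine lt_of_le_of_lt (Finset.sum_le_sum fun i _ => ?_) (lt_of_lt_of_le h3 (min_le_left _ _))
    have hcd := (h1 i).2.2
    rcases le_total (d i) m with hd | hd <;> rcases le_total (c i) m with hc | hc <;>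
      simp only [hd, hc, min_eq_left, min_eq_right] <;> linarith

theorem absContOn_of_dist_le {a b K : ℝ} {γ : ℝ → Γ.G} (hK : 0 ≤ K)
    (h : ∀ u ∈ Icc a b, ∀ w ∈ Icc a b, dist (γ u) (γ w) ≤ K * |u - w|) : Γ.AbsContOn a b γ := by
  intro ε hε
  refine ⟨ε / (K + 1), by positivity, fun n c d h1 h2 h3 => ?_⟩
  have h4 : ∑ i, dist (γ (c i)) (γ (d i)) ≤ ∑ i, (K + 1) * (d i - c i) := by
    refine Finset.sum_le_sum fun i _ => ?_
    obtain ⟨hc, hd, hcd⟩ := h1 i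
    have := h _ hc _ hd
    rw [abs_sub_comm, abs_of_nonneg (by linarith)] at this
    nlinarith
  rw [← Finset.mul_sum] at h4
  rw [lt_div_iff₀ (by positivity)] at h3
  linarith

/-! ### Connectedness through chains of edges -/

/-- The points `x` and `y` lie on a common edge. -/
def SameEdge (Γ : MetricGraph) (x y : Γ.G) : Prop :=
  ∃ j, ∃ s ∈ Icc (0:ℝ) (Γ.len j), ∃ t ∈ Icc (0:ℝ) (Γ.len j), Γ.σ j s = x ∧ Γ.σ j t = y

/-- The points `x` and `y` are joined by a chain of `n` steps, each inside one edge. -/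
def Chain (Γ : MetricGraph) : ℕ → Γ.G → Γ.G → Prop
  | 0, x, y => x = y
  | n + 1, x, y => ∃ z, Chain Γ n x z ∧ Γ.SameEdge z y

theorem sameEdge_refl (x : Γ.G) : Γ.SameEdge x x := by
  obtain ⟨j, s, hs, h⟩ := Γ.cover x
  exact ⟨j, s, hs, s, hs, h, h⟩

theorem Chain.mono {n m : ℕ} (hnm : n ≤ m) {x y : Γ.G} (h : Γ.Chain n x y) : Γ.Chain m x y := by
  induction hnm with
  | refl => exact h
  | step _ ih => exact ⟨y, ih, sameEdge_refl y⟩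

theorem Chain.trans_chain {n m : ℕ} {x y z : Γ.G} (h : Γ.Chain n x y) (h' : Γ.Chain m y z) :
    Γ.Chain (n + m) x z := by
  induction m generalizing z with
  | zero => exact h' ▸ h
  | succ m ih =>
    obtain ⟨w, hw, hwz⟩ := h'
    exact ⟨w, ih hw, hwz⟩

theorem SameEdge.chain {x y : Γ.G} (h : Γ.SameEdge x y) : Γ.Chain 1 x y := ⟨x, rfl, h⟩

theorem continuousOn_σ (j : Γ.E) : ContinuousOn (Γ.σ j) (Icc 0 (Γ.len j)) := by
  have : LipschitzOnWith 1 (Γ.σ j) (Icc 0 (Γ.len j)) :=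
    LipschitzOnWith.of_dist_le_mul fun s hs t ht => by
      simpa [Real.dist_eq] using Γ.σ_lip j s hs t ht
  exact this.continuousOn

theorem isClosed_edge (j : Γ.E) : IsClosed (Γ.σ j '' Icc 0 (Γ.len j)) :=
  (isCompact_Icc.image_of_continuousOn (continuousOn_σ j)).isClosed

/-- Any two points are joined by a chain of edges: the set reached from `x` and its complement
are both finite unions of closed edges, and a clopen set cannot be left along a path. -/
theorem exists_chain (x y : Γ.G) : ∃ n, Γ.Chain n x y := by
  set R : Set Γ.G := {z | ∃ n, Γ.Chain n x z} with hR
  have step : ∀ z w, Γ.SameEdge z w → z ∈ R → w ∈ R := by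
    rintro z w h ⟨n, hn⟩
    exact ⟨n + 1, z, hn, h⟩
  have symm : ∀ z w, Γ.SameEdge z w → Γ.SameEdge w z := by
    rintro z w ⟨j, s, hs, t, ht, h1, h2⟩
    exact ⟨j, t, ht, s, hs, h2, h1⟩
  have key : ∀ P : Set Γ.G, (∀ z w, Γ.SameEdge z w → z ∈ P → w ∈ P) → IsClosed P := by
    intro P hP
    have : P = ⋃ j ∈ {j | Γ.σ j 0 ∈ P}, Γ.σ j '' Icc 0 (Γ.len j) := by
      ext z
      simp only [mem_iUnion, mem_ofPred_eq, exists_prop]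
      constructor
      · intro hz
        obtain ⟨j, s, hs, rfl⟩ := Γ.cover z
        exact ⟨j, hP _ _ ⟨j, s, hs, 0, ⟨le_rfl, (Γ.len_pos j).le⟩, rfl, rfl⟩ hz, s, hs, rfl⟩
      · rintro ⟨j, hj, s, hs, rfl⟩
        exact hP _ _ ⟨j, 0, ⟨le_rfl, (Γ.len_pos j).le⟩, s, hs, rfl, rfl⟩ hj
    rw [this]
    exact (toFinite _).isClosed_biUnion fun j _ => isClosed_edge j
  have hc : IsClopen R := ⟨key R step, by
    rw [← isClosed_compl_iff]
    exact key _ fun z w h hz hw => hz (step w z (symm z w h) hw)⟩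
  obtain ⟨T, hT, γ, h0, h1, hγ⟩ := Γ.path_exists x y
  have hpre : IsPreconnected (γ '' Icc 0 T) := isPreconnected_Icc.image _ hγ.continuousOn
  have hx : x ∈ R := ⟨0, rfl⟩
  exact hpre.subset_isClopen hc ⟨x, ⟨0, ⟨le_rfl, hT⟩, h0⟩, hx⟩ ⟨T, ⟨hT, le_rfl⟩, h1⟩

/-- The length of the chains is uniformly bounded because there are finitely many edges. -/
theorem exists_uniform_chain (Γ : MetricGraph) : ∃ N : ℕ, 0 < N ∧ ∀ x y : Γ.G, Γ.Chain N x y := by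
  choose n hn using fun i j : Γ.E => exists_chain (Γ.σ i 0) (Γ.σ j 0)
  refine ⟨1 + (∑ i, ∑ j, n i j) + 1, by omega, fun x y => ?_⟩
  obtain ⟨i, s, hs, rfl⟩ := Γ.cover x
  obtain ⟨j, t, ht, rfl⟩ := Γ.cover y
  have hle : n i j ≤ ∑ i, ∑ j, n i j :=
    (Finset.single_le_sum (f := fun j => n i j) (fun _ _ => Nat.zero_le _)
      (Finset.mem_univ j)).trans
    (Finset.single_le_sum (f := fun i => ∑ j, n i j) (fun _ _ => Nat.zero_le _)
      (Finset.mem_univ i))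
  have h1 : Γ.SameEdge (Γ.σ i s) (Γ.σ i 0) :=
    ⟨i, s, hs, 0, ⟨le_rfl, (Γ.len_pos i).le⟩, rfl, rfl⟩
  have h2 : Γ.SameEdge (Γ.σ j 0) (Γ.σ j t) :=
    ⟨j, 0, ⟨le_rfl, (Γ.len_pos j).le⟩, t, ht, rfl, rfl⟩
  exact (h1.chain.trans_chain ((hn i j).mono hle)).trans_chain h2.chain

end MetricGraph

namespace TonelliLagrangian

variable {Γ : MetricGraph}

/-! ### Bounds on the Lagrangian -/

theorem continuousOn_L (Λ : TonelliLagrangian Γ) (j : Γ.E) :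
    ContinuousOn (fun p : ℝ × ℝ => Λ.L j p.1 p.2) (Icc 0 (Γ.len j) ×ˢ (univ : Set ℝ)) :=
  (Λ.smooth j).continuousOn

/-- Superlinearity is only assumed pointwise in the base point; convexity and continuity make the
resulting lower bound uniform. Near `x₀` the values at `±R` exceed the value at `0`, which
by convexity confines the minimum over velocities to `[-R, R]`. -/
theorem exists_lower_bound (Λ : TonelliLagrangian Γ) :
    ∃ B : ℝ, ∀ j, ∀ s ∈ Icc (0:ℝ) (Γ.len j), ∀ v, -B ≤ Λ.L j s v := by
  have hj : ∀ j, ∃ B : ℝ, ∀ s ∈ Icc (0:ℝ) (Γ.len j), ∀ v, -B ≤ Λ.L j s v := by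
    intro j
    refine isCompact_Icc.induction_on (p := fun S => ∃ B : ℝ, ∀ s ∈ S, ∀ v, -B ≤ Λ.L j s v)
      ⟨0, fun s hs => absurd hs (by simp)⟩ ?_ ?_ ?_
    · rintro S T hST ⟨B, hB⟩
      exact ⟨B, fun s hs => hB s (hST hs)⟩
    · rintro S T ⟨B, hB⟩ ⟨B', hB'⟩
      refine ⟨max B B', fun s hs v => ?_⟩
      rcases hs with hs | hs
      · have := hB s hs v; have := le_max_left B B'; linarith
      · have := hB' s hs v; have := le_max_right B B'; linarith
    · intro x₀ hx₀
      obtain ⟨D, hD⟩ := Λ.superlinear j x₀ hx₀ 1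
      obtain ⟨R, hR0, hR⟩ : ∃ R : ℝ, 0 < R ∧ Λ.L j x₀ 0 + D < R :=
        ⟨max 1 (Λ.L j x₀ 0 + D + 1), lt_max_of_lt_left one_pos,
          lt_max_of_lt_right (by linarith)⟩
      have cont : ∀ v, ContinuousWithinAt (fun s => Λ.L j s v) (Icc 0 (Γ.len j)) x₀ := by
        intro v
        have : ContinuousOn (fun s => Λ.L j s v) (Icc 0 (Γ.len j)) :=
          (Λ.continuousOn_L j).comp (f := fun s : ℝ => (s, v)) (by fun_prop)
            (fun s hs => ⟨hs, mem_univ _⟩)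
        exact this x₀ hx₀
      have h1 : Λ.L j x₀ 0 < Λ.L j x₀ R := by
        have := hD R; rw [abs_of_pos hR0] at this; linarith
      have h2 : Λ.L j x₀ 0 < Λ.L j x₀ (-R) := by
        have := hD (-R); rw [abs_neg, abs_of_pos hR0] at this; linarith
      have e1 := (cont 0).eventually_lt (cont R) h1
      have e2 := (cont 0).eventually_lt (cont (-R)) h2
      obtain ⟨B, hB⟩ := ((isCompact_Icc (a := (0:ℝ)) (b := Γ.len j)).prod
        (isCompact_Icc (a := -R) (b := R))).bddBelow_image
        ((Λ.continuousOn_L j).mono (prod_mono le_rfl (subset_univ _)))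
      have hB' : ∀ s ∈ Icc 0 (Γ.len j), ∀ v ∈ Icc (-R) R, B ≤ Λ.L j s v := fun s hs v hv =>
        hB ⟨(s, v), ⟨hs, hv⟩, rfl⟩
      refine ⟨_, (e1.and (e2.and self_mem_nhdsWithin)), -B, fun s hs v => ?_⟩
      obtain ⟨hs1, hs2, hs3⟩ := hs
      have hconv := (Λ.strictconv j s hs3).convexOn
      have h0 := hB' s hs3 0 ⟨by linarith, hR0.le⟩
      rw [neg_neg]
      rcases lt_or_ge v (-R) with hv | hv
      · have := hconv.le_max_of_mem_Icc (mem_univ v) (mem_univ 0)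
          (show -R ∈ Icc v 0 from ⟨hv.le, by linarith⟩)
        rcases le_max_iff.1 this with h | h <;> linarith
      · rcases le_or_gt v R with hv' | hv'
        · exact hB' s hs3 v ⟨hv, hv'⟩
        · have := hconv.le_max_of_mem_Icc (mem_univ 0) (mem_univ v)
            (show R ∈ Icc 0 v from ⟨hR0.le, hv'.le⟩)
          rcases le_max_iff.1 this with h | h <;> linarith
  choose B hB using hj
  refine ⟨∑ j, |B j|, fun j s hs v => ?_⟩
  have h1 := hB j s hs v
  have h2 := Finset.single_le_sum (f := fun j => |B j|) (fun _ _ => abs_nonneg _)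
    (Finset.mem_univ j)
  have h3 := le_abs_self (B j)
  linarith

theorem exists_upper_bound (Λ : TonelliLagrangian Γ) :
    ∃ A : ℝ, ∀ j, ∀ s ∈ Icc (0:ℝ) (Γ.len j), ∀ v ∈ Icc (-Γ.len j) (Γ.len j),
      Λ.L j s v ≤ A := by
  have hj : ∀ j, ∃ A : ℝ, ∀ s ∈ Icc (0:ℝ) (Γ.len j), ∀ v ∈ Icc (-Γ.len j) (Γ.len j),
      Λ.L j s v ≤ A := by
    intro j
    obtain ⟨B, hB⟩ := ((isCompact_Icc (a := (0:ℝ)) (b := Γ.len j)).prod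
      (isCompact_Icc (a := -Γ.len j) (b := Γ.len j))).bddAbove_image
      ((Λ.continuousOn_L j).mono (prod_mono le_rfl (subset_univ _)))
    exact ⟨B, fun s hs v hv => hB ⟨(s, v), ⟨hs, hv⟩, rfl⟩⟩
  choose B hB using hj
  refine ⟨∑ j, |B j|, fun j s hs v hv => ?_⟩
  have h1 := hB j s hs v hv
  have h2 := Finset.single_le_sum (f := fun j => |B j|) (fun _ _ => abs_nonneg _)
    (Finset.mem_univ j)
  have h3 := le_abs_self (B j)
  linarith

/-! ### The set of actions -/

/-- The integrand of the action along `γ`. -/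
noncomputable def lagAlong (Λ : TonelliLagrangian Γ) (γ : ℝ → Γ.G) (t : ℝ) : ℝ :=
  Λ.lagOf (γ t) (Γ.gderiv γ t)

/-- The actions of the admissible curves from `x` to `y` in time `t`, whose infimum is `h_t`. -/
def actionSet (Λ : TonelliLagrangian Γ) (t : ℝ) (x y : Γ.G) : Set ℝ :=
  {r | ∃ γ : ℝ → Γ.G, Γ.AbsContOn 0 t γ ∧ γ 0 = x ∧ γ t = y ∧
    Λ.ActionIntegrableOn 0 t γ ∧ r = Λ.action 0 t γ}

theorem lagAlong_congr (Λ : TonelliLagrangian Γ) {γ γ' : ℝ → Γ.G} {t : ℝ}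
    (h : γ =ᶠ[nhds t] γ') : Λ.lagAlong γ t = Λ.lagAlong γ' t := by
  unfold lagAlong
  rw [MetricGraph.gderiv_congr h, h.eq_of_nhds]

theorem lagAlong_shift (Λ : TonelliLagrangian Γ) (γ : ℝ → Γ.G) (s t : ℝ) :
    Λ.lagAlong (fun u => γ (u + s)) t = Λ.lagAlong γ (t + s) := by
  unfold lagAlong
  rw [MetricGraph.gderiv_shift γ s t]

theorem integrable_congr_Ioo {f g : ℝ → ℝ} {a b : ℝ} (hab : a ≤ b)
    (h : ∀ᵐ u, u ∈ Ioo a b → f u = g u) (hg : IntegrableOn g (Icc a b)) :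
    IntegrableOn f (Icc a b) ∧ ∫ u in a..b, f u = ∫ u in a..b, g u := by
  have h' : f =ᵐ[volume.restrict (Ioo a b)] g := (ae_restrict_iff' measurableSet_Ioo).2 h
  rw [integrableOn_Icc_iff_integrableOn_Ioo] at hg ⊢
  refine ⟨hg.congr h'.symm, ?_⟩
  rw [intervalIntegral.integral_of_le hab, intervalIntegral.integral_of_le hab,
    integral_Ioc_eq_integral_Ioo, integral_Ioc_eq_integral_Ioo]
  exact integral_congr_ae h'

theorem actionIntegrableOn_shift (Λ : TonelliLagrangian Γ) {γ : ℝ → Γ.G} {a b : ℝ} (s : ℝ)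
    (h : Λ.ActionIntegrableOn (a + s) (b + s) γ) (hab : a ≤ b) :
    Λ.ActionIntegrableOn a b (fun u => γ (u + s)) := by
  change IntegrableOn (Λ.lagAlong fun u => γ (u + s)) _
  have h : IntegrableOn (Λ.lagAlong γ) _ := h
  rw [funext (Λ.lagAlong_shift γ s), ← intervalIntegrable_iff_integrableOn_Icc_of_le hab]
  rw [← intervalIntegrable_iff_integrableOn_Icc_of_le (by linarith)] at h
  simpa using h.comp_add_right s

theorem action_shift (Λ : TonelliLagrangian Γ) (γ : ℝ → Γ.G) (a b s : ℝ) :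
    Λ.action a b (fun u => γ (u + s)) = Λ.action (a + s) (b + s) γ := by
  change ∫ t in a..b, Λ.lagAlong (fun u => γ (u + s)) t = ∫ t in (a + s)..(b + s), Λ.lagAlong γ t
  rw [funext (Λ.lagAlong_shift γ s)]
  exact intervalIntegral.integral_comp_add_right (Λ.lagAlong γ) s

theorem action_add (Λ : TonelliLagrangian Γ) {γ : ℝ → Γ.G} {a m b : ℝ} (ham : a ≤ m) (hmb : m ≤ b)
    (h1 : Λ.ActionIntegrableOn a m γ) (h2 : Λ.ActionIntegrableOn m b γ) :
    Λ.action a m γ + Λ.action m b γ = Λ.action a b γ :=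
  intervalIntegral.integral_add_adjacent_intervals
    ((intervalIntegrable_iff_integrableOn_Icc_of_le ham).2 h1)
    ((intervalIntegrable_iff_integrableOn_Icc_of_le hmb).2 h2)

/-- Concatenation of curves. -/
theorem actionSet_concat (Λ : TonelliLagrangian Γ) {s t r r' : ℝ} (hs : 0 ≤ s) (ht : 0 ≤ t)
    {x y z : Γ.G} (h : r ∈ Λ.actionSet s x y) (h' : r' ∈ Λ.actionSet t y z) :
    r + r' ∈ Λ.actionSet (s + t) x z := by
  obtain ⟨γ₁, ac₁, b₁, e₁, i₁, rfl⟩ := h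
  obtain ⟨γ₂, ac₂, b₂, e₂, i₂, rfl⟩ := h'
  set γ₃ : ℝ → Γ.G := fun u => γ₂ (u + -s) with hγ₃
  have ac₃ : Γ.AbsContOn s (s + t) γ₃ :=
    MetricGraph.AbsContOn.shift (-s) (by simpa using ac₂)
  have i₃ : Λ.ActionIntegrableOn s (s + t) γ₃ :=
    Λ.actionIntegrableOn_shift (-s) (by simpa using i₂) (by linarith)
  have a₃ : Λ.action s (s + t) γ₃ = Λ.action 0 t γ₂ := by
    rw [hγ₃, Λ.action_shift]; simp
  set γ : ℝ → Γ.G := fun u => if u ≤ s then γ₁ u else γ₃ u with hγ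
  have eq₁ : ∀ u ≤ s, γ u = γ₁ u := fun u hu => if_pos hu
  have eq₃ : ∀ u, s ≤ u → γ u = γ₃ u := by
    intro u hu
    rcases hu.eq_or_lt with rfl | hu
    · rw [eq₁ _ le_rfl, e₁, hγ₃]; simp [b₂]
    · exact if_neg (not_le.2 hu)
  have I₁ := integrable_congr_Ioo (f := Λ.lagAlong γ) hs (Eventually.of_forall fun u hu =>
    Λ.lagAlong_congr (Filter.eventuallyEq_of_mem (Iio_mem_nhds hu.2)
      fun w hw => eq₁ w (le_of_lt hw))) i₁
  have I₃ := integrable_congr_Ioo (f := Λ.lagAlong γ) (a := s) (b := s + t) (by linarith)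
    (Eventually.of_forall fun u hu =>
    Λ.lagAlong_congr (Filter.eventuallyEq_of_mem (Ioi_mem_nhds hu.1)
      fun w hw => eq₃ w (le_of_lt hw))) i₃
  refine ⟨γ, ?_, ?_, ?_, ?_, ?_⟩
  · exact MetricGraph.AbsContOn.glue hs (by linarith)
      (ac₁.congr fun u hu => (eq₁ u hu.2).symm) (ac₃.congr fun u hu => (eq₃ u hu.1).symm)
  · rw [eq₁ 0 hs, b₁]
  · rw [eq₃ _ (by linarith), hγ₃]; simp [e₂]
  · have := I₁.1.union I₃.1
    rwa [Icc_union_Icc_eq_Icc hs (by linarith)] at this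
  · rw [← Λ.action_add hs (by linarith) I₁.1 I₃.1, ← a₃]
    exact congrArg₂ _ I₁.2.symm I₃.2.symm

/-- A curve can be cut at an intermediate time. -/
theorem actionSet_split (Λ : TonelliLagrangian Γ) {s t r : ℝ} (hs : 0 ≤ s) (ht : 0 ≤ t)
    {x z : Γ.G} (h : r ∈ Λ.actionSet (s + t) x z) :
    ∃ y, ∃ r₁ ∈ Λ.actionSet s x y, ∃ r₂ ∈ Λ.actionSet t y z, r = r₁ + r₂ := by
  obtain ⟨γ, ac, b, e, i, rfl⟩ := h
  have i₁ : Λ.ActionIntegrableOn 0 s γ :=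
    IntegrableOn.mono_set i (Icc_subset_Icc le_rfl (by linarith))
  have i₂ : Λ.ActionIntegrableOn s (s + t) γ := IntegrableOn.mono_set i (Icc_subset_Icc hs le_rfl)
  have e2 : s + t = t + s := add_comm s t
  refine ⟨γ s, _, ⟨γ, ac.mono le_rfl (by linarith), b, rfl, i₁, rfl⟩,
    _, ⟨fun u => γ (u + s), ?_, by simp, by simp [← e, e2], ?_, rfl⟩, ?_⟩
  · exact MetricGraph.AbsContOn.shift s (ac.mono (by linarith) (by linarith))
  · exact Λ.actionIntegrableOn_shift s (by rw [zero_add, ← e2]; exact i₂) ht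
  · rw [Λ.action_shift, zero_add, ← e2, Λ.action_add hs (by linarith) i₁ i₂]

theorem le_of_mem_actionSet (Λ : TonelliLagrangian Γ) {B : ℝ}
    (hB : ∀ j, ∀ s ∈ Icc (0:ℝ) (Γ.len j), ∀ v, -B ≤ Λ.L j s v) {t r : ℝ} (ht : 0 ≤ t) {x y : Γ.G}
    (h : r ∈ Λ.actionSet t x y) : -(B * t) ≤ r := by
  obtain ⟨γ, -, -, -, i, rfl⟩ := h
  have h1 := intervalIntegral.integral_mono_on ht (f := fun _ => -B) (by simp)
    ((intervalIntegrable_iff_integrableOn_Icc_of_le ht).2 i)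
    (fun u _ => hB _ _ (Γ.cover (γ u)).choose_spec.choose_spec.1 _)
  rw [intervalIntegral.integral_const] at h1
  change _ ≤ ∫ u in (0:ℝ)..t, _
  refine le_trans (le_of_eq ?_) h1
  simp [mul_comm]

/-! ### Curves of bounded action -/

/-- Staying at `x` costs at most `A` per unit of time. -/
theorem actionSet_const (Λ : TonelliLagrangian Γ) {A : ℝ}
    (hA : ∀ j, ∀ s ∈ Icc (0:ℝ) (Γ.len j), ∀ v ∈ Icc (-Γ.len j) (Γ.len j), Λ.L j s v ≤ A)
    {t : ℝ} (ht : 0 ≤ t) (x : Γ.G) : ∃ r ∈ Λ.actionSet t x x, r ≤ A * t := by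
  have hL : (fun u => Λ.lagOf ((fun _ : ℝ => x) u) (Γ.gderiv (fun _ => x) u)) =
      fun _ => Λ.lagOf x 0 := by
    funext u
    rw [MetricGraph.gderiv_eq (MetricGraph.hasGDerivAt_const x u)]
  refine ⟨_, ⟨fun _ => x, MetricGraph.absContOn_of_dist_le le_rfl (by simp), rfl, rfl, ?_, rfl⟩, ?_⟩
  · unfold ActionIntegrableOn
    rw [hL]
    simp
  · unfold action
    rw [hL, intervalIntegral.integral_const, smul_eq_mul, sub_zero, mul_comm]
    refine mul_le_mul_of_nonneg_right (hA _ _ (Γ.cover x).choose_spec.choose_spec.1 _ ?_) ht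
    have := Γ.len_pos (Γ.cover x).choose
    constructor <;> linarith

/-- Outside the vertices, `lagOf` is computed in any edge coordinate. -/
theorem lagOf_eq (Λ : TonelliLagrangian Γ) {j : Γ.E} {s : ℝ} (hs : s ∈ Icc 0 (Γ.len j))
    (hv : Γ.σ j s ∉ Γ.vertexSet) (v : ℝ) : Λ.lagOf (Γ.σ j s) v = Λ.L j s v := by
  have h := (Γ.cover (Γ.σ j s)).choose_spec.choose_spec
  obtain ⟨h1, h2⟩ := MetricGraph.coord_unique hs h.1 h.2.symm hv
  exact (congrArg₂ (fun i q => Λ.L i q v) h1 h2).symm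

/-- Two points of an edge are joined in unit time, at constant speed along the edge. Such a curve
meets the finite vertex set only finitely often, so almost everywhere the integrand is given
by the edge coordinate. -/
theorem actionSet_sameEdge (Λ : TonelliLagrangian Γ) {A : ℝ}
    (hA : ∀ j, ∀ s ∈ Icc (0:ℝ) (Γ.len j), ∀ v ∈ Icc (-Γ.len j) (Γ.len j), Λ.L j s v ≤ A)
    {x y : Γ.G} (h : Γ.SameEdge x y) : ∃ r ∈ Λ.actionSet 1 x y, r ≤ A := by
  obtain ⟨j, a, ha, b, hb, rfl, rfl⟩ := h
  by_cases hab : a = b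
  · subst hab
    simpa using Λ.actionSet_const hA zero_le_one (Γ.σ j a)
  set f : ℝ → ℝ := fun u => a + (b - a) * u with hf
  have hfm : ∀ u ∈ Icc (0:ℝ) 1, f u ∈ Icc 0 (Γ.len j) := by
    intro u hu
    have h1 : f u = (1 - u) * a + u * b := by rw [hf]; ring
    rw [h1]
    have h2 : 0 ≤ 1 - u := by linarith [hu.2]
    constructor
    · have := mul_nonneg h2 ha.1; have := mul_nonneg hu.1 hb.1; linarith
    · have := mul_le_mul_of_nonneg_left ha.2 h2; have := mul_le_mul_of_nonneg_left hb.2 hu.1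
      linarith
  have hba : b - a ≠ 0 := sub_ne_zero.2 (Ne.symm hab)
  have hfi : Function.Injective f := by
    intro u w huw
    exact mul_left_cancel₀ hba (add_left_cancel huw)
  have hfc : Continuous f := by fun_prop
  set g : ℝ → ℝ := fun u => Λ.L j (f u) (b - a) with hg
  have hgc : ContinuousOn g (Icc 0 1) :=
    (Λ.continuousOn_L j).comp (f := fun u => (f u, b - a)) (by fun_prop)
      (fun u hu => ⟨hfm u hu, mem_univ _⟩)
  have hgi : IntegrableOn g (Icc 0 1) := hgc.integrableOn_Icc
  set S : Set ℝ := {u | u ∈ Icc (0:ℝ) 1 ∧ Γ.σ j (f u) ∈ Γ.vertexSet} with hS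
  have hSf : S.Finite := by
    refine Set.Finite.of_finite_image (f := fun u => Γ.σ j (f u))
      (Γ.vertexSet_finite.subset ?_) ?_
    · rintro _ ⟨u, hu, rfl⟩; exact hu.2
    · intro u hu w hw huw
      exact hfi (Γ.σ_inj j (hfm u hu.1) (hfm w hw.1) huw)
  have hae : ∀ᵐ u, u ∈ Ioo (0:ℝ) 1 → Λ.lagAlong (fun u => Γ.σ j (f u)) u = g u := by
    have : ∀ᵐ u : ℝ, u ∉ S := measure_eq_zero_iff_ae_notMem.1 (hSf.measure_zero _)
    filter_upwards [this] with u hu hu'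
    have hv : Γ.σ j (f u) ∉ Γ.vertexSet := fun h => hu ⟨Ioo_subset_Icc_self hu', h⟩
    have hd : Γ.HasGDerivAt (fun u => Γ.σ j (f u)) u (b - a) := by
      refine Or.inr ⟨hv, j, f, Eventually.of_forall fun _ => rfl, ?_, ?_⟩
      · filter_upwards [Ioo_mem_nhds hu'.1 hu'.2] with w hw
        exact hfm w (Ioo_subset_Icc_self hw)
      · have hd := ((hasDerivAt_id u).const_mul (b - a)).const_add a
        rw [mul_one] at hd
        exact hd
    unfold lagAlong
    rw [MetricGraph.gderiv_eq hd, Λ.lagOf_eq (hfm u (Ioo_subset_Icc_self hu')) hv]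
  have I := integrable_congr_Ioo zero_le_one hae hgi
  refine ⟨_, ⟨fun u => Γ.σ j (f u), ?_, by simp [hf], by simp [hf], I.1, rfl⟩, ?_⟩
  · refine MetricGraph.absContOn_of_dist_le (abs_nonneg (b - a)) fun u hu w hw => ?_
    refine (Γ.σ_lip j _ (hfm u hu) _ (hfm w hw)).trans (le_of_eq ?_)
    rw [← abs_mul]; congr 1; simp only [hf]; ring
  · change ∫ u in (0:ℝ)..1, Λ.lagAlong (fun u => Γ.σ j (f u)) u ≤ A
    rw [I.2]
    have := intervalIntegral.integral_mono_on zero_le_one (g := fun _ => A)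
      ((intervalIntegrable_iff_integrableOn_Icc_of_le zero_le_one).2 hgi) (by simp)
      (fun u hu => hA j _ (hfm u hu) (b - a)
        ⟨by linarith [ha.2, hb.1], by linarith [ha.1, hb.2]⟩)
    simpa using this

theorem actionSet_chain (Λ : TonelliLagrangian Γ) {A : ℝ}
    (hA : ∀ j, ∀ s ∈ Icc (0:ℝ) (Γ.len j), ∀ v ∈ Icc (-Γ.len j) (Γ.len j), Λ.L j s v ≤ A)
    (n : ℕ) {x y : Γ.G} (h : Γ.Chain n x y) : ∃ r ∈ Λ.actionSet n x y, r ≤ A * n := by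
  induction n generalizing y with
  | zero =>
    obtain rfl : x = y := h
    simpa using Λ.actionSet_const hA le_rfl x
  | succ n ih =>
    obtain ⟨z, hz, hzy⟩ := h
    obtain ⟨r, hr, hr'⟩ := ih hz
    obtain ⟨q, hq, hq'⟩ := Λ.actionSet_sameEdge hA hzy
    refine ⟨r + q, ?_, by push_cast; linarith⟩
    push_cast
    exact Λ.actionSet_concat (Nat.cast_nonneg n) zero_le_one hr hq

end TonelliLagrangian

/-! ### Almost additive actions grow linearly -/

/-- Comparison of growth rates for a function that is subadditive and, up to the error `K`,
superadditive: `(g s - K) / s ≤ g t / t`. -/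
theorem rate_le_rate {g : ℝ → ℝ} {K T C : ℝ} (hT : 0 < T)
    (sub : ∀ s t, 0 ≤ s → 0 ≤ t → g (s + t) ≤ g s + g t)
    (sup : ∀ s t, T ≤ s → T ≤ t → g s + g t - K ≤ g (s + t))
    (up : ∀ t, 0 ≤ t → g t ≤ C * t) {s t : ℝ} (hs : T ≤ s) (ht : T ≤ t) :
    (g s - K) / s ≤ g t / t := by
  have hs0 : 0 < s := hT.trans_le hs
  have ht0 : 0 < t := hT.trans_le ht
  have h1 : ∀ n : ℕ, (n + 1 : ℝ) * (g s - K) ≤ g ((n + 1 : ℝ) * s) - K := by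
    intro n
    induction n with
    | zero => simp
    | succ n ih =>
      have h2 := sup (((n : ℝ) + 1) * s) s
        (by nlinarith [Nat.cast_nonneg (α := ℝ) n]) hs
      have e : (((n + 1 : ℕ) : ℝ) + 1) * s = ((n : ℝ) + 1) * s + s := by push_cast; ring
      rw [e]
      push_cast
      linarith
  have h2 : ∀ (m : ℕ) (r : ℝ), 0 ≤ r → g (m * t + r) ≤ m * g t + g r := by
    intro m r hr
    induction m with
    | zero => simp
    | succ m ih =>
      have h3 := sub t (m * t + r) ht0.le (by positivity)
      have e : ((m + 1 : ℕ) : ℝ) * t + r = t + (m * t + r) := by push_cast; ring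
      rw [e]
      push_cast
      linarith
  have h3 : ∀ n : ℕ, (n + 1 : ℝ) * (g s - K - s * (g t / t)) ≤ |g t| + |C| * t + |K| := by
    intro n
    -- Euclidean division of `(n + 1) s` by `t`.
    set m := ⌊(n + 1 : ℝ) * s / t⌋₊ with hm
    have hm1 : (m : ℝ) ≤ (n + 1 : ℝ) * s / t := Nat.floor_le (by positivity)
    have hm2 : (n + 1 : ℝ) * s / t < m + 1 := Nat.lt_floor_add_one _
    rw [le_div_iff₀ ht0] at hm1
    rw [div_lt_iff₀ ht0] at hm2
    set r := (n + 1 : ℝ) * s - m * t with hr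
    have hr0 : 0 ≤ r := by linarith
    have hrt : r ≤ t := by linarith
    have a1 := h1 n
    have a2 := h2 m r hr0
    rw [show (m : ℝ) * t + r = (n + 1 : ℝ) * s by rw [hr]; ring] at a2
    have a3 : g r ≤ |C| * t := (up r hr0).trans
      (mul_le_mul (le_abs_self C) hrt hr0 (abs_nonneg C))
    have a4 : (m : ℝ) * g t = (n + 1 : ℝ) * (s * (g t / t)) - r * (g t / t) := by
      rw [hr]; field_simp; ring
    have a5 : -(r * (g t / t)) ≤ |g t| := by
      have : |r * (g t / t)| ≤ |g t| := by
        rw [abs_mul, abs_div, abs_of_nonneg hr0, abs_of_pos ht0, mul_div_assoc', div_le_iff₀ ht0,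
          mul_comm]
        exact mul_le_mul_of_nonneg_left hrt (abs_nonneg _)
      exact (neg_le_abs _).trans this
    have a6 := neg_abs_le K
    rw [mul_sub]
    linarith
  rw [div_le_iff₀ hs0, mul_comm]
  by_contra hcon
  push Not at hcon
  obtain ⟨n, hn⟩ := exists_nat_gt ((|g t| + |C| * t + |K|) / (g s - K - s * (g t / t)))
  rw [div_lt_iff₀ (by linarith)] at hn
  have := h3 n
  nlinarith

/-- If sets of costs `S t x y` are compatible with concatenation and cutting, bounded below
linearly in time, and any two points are joined at bounded cost in a fixed time, then the
infimal costs stay within bounded distance of a linear function of time. -/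
theorem exists_linear_rate {X : Type*} [Nonempty X] (S : ℝ → X → X → Set ℝ) {N A B C : ℝ}
    (hN : 0 < N)
    (lower : ∀ t x y r, 0 ≤ t → r ∈ S t x y → -(B * t) ≤ r)
    (concat : ∀ s t x y z r r', 0 ≤ s → 0 ≤ t → r ∈ S s x y → r' ∈ S t y z →
      r + r' ∈ S (s + t) x z)
    (split : ∀ s t x z r, 0 ≤ s → 0 ≤ t → r ∈ S (s + t) x z →
      ∃ y, ∃ r₁ ∈ S s x y, ∃ r₂ ∈ S t y z, r = r₁ + r₂)
    (join : ∀ x y, ∃ r ∈ S N x y, r ≤ A)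
    (stay : ∀ t x, 0 ≤ t → ∃ r ∈ S t x x, r ≤ C * t) :
    ∃ c D T : ℝ, ∀ t, T ≤ t → ∀ x y, |sInf (S t x y) + c * t| ≤ D := by
  obtain ⟨x₀⟩ := ‹Nonempty X›
  set D := A + A + B * (N + N) with hD
  have bdd : ∀ t x y, 0 ≤ t → BddBelow (S t x y) := fun t x y ht =>
    ⟨-(B * t), fun r hr => lower t x y r ht hr⟩
  -- The last time `2N` of a curve is replaced by connections from `x'` and to `y'`.
  have move : ∀ t x y x' y' r, N + N ≤ t → r ∈ S t x y → ∃ r' ∈ S t x' y', r' ≤ r + D := by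
    intro t x y x' y' r ht hr
    have e : t = (t - (N + N)) + (N + N) := by ring
    rw [e] at hr
    obtain ⟨z, r₁, hr₁, r₂, hr₂, rfl⟩ := split _ _ _ _ _ (by linarith) (by linarith) hr
    obtain ⟨a, ha, ha'⟩ := join x' x
    obtain ⟨b, hb, hb'⟩ := join z y'
    have h1 := concat _ _ _ _ _ _ _ (by linarith) hN.le
      (concat _ _ _ _ _ _ _ hN.le (by linarith) ha hr₁) hb
    refine ⟨a + r₁ + b, ?_, ?_⟩
    · convert h1 using 2; ring
    · have := lower _ _ _ _ (by linarith) hr₂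
      rw [hD]; linarith
  set g : ℝ → ℝ := fun t => sInf (S t x₀ x₀) with hg
  have ne : ∀ t, 0 ≤ t → (S t x₀ x₀).Nonempty := fun t ht => by
    obtain ⟨r, hr, -⟩ := stay t x₀ ht
    exact ⟨r, hr⟩
  have near₁ : ∀ t x y, N + N ≤ t → sInf (S t x y) ≤ g t + D := by
    intro t x y ht
    have : sInf (S t x y) - D ≤ g t := by
      refine le_csInf (ne t (by linarith)) fun r hr => ?_
      obtain ⟨r', hr', h⟩ := move t _ _ x y r ht hr
      have := csInf_le (bdd t x y (by linarith)) hr'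
      linarith
    linarith
  have near₂ : ∀ t x y r, N + N ≤ t → r ∈ S t x y → g t - D ≤ r := by
    intro t x y r ht hr
    obtain ⟨r', hr', h⟩ := move t _ _ x₀ x₀ r ht hr
    have := csInf_le (bdd t x₀ x₀ (by linarith)) hr'
    simp only [hg]
    linarith
  have near₃ : ∀ t x y, N + N ≤ t → g t - D ≤ sInf (S t x y) := by
    intro t x y ht
    obtain ⟨r, hr⟩ := ne t (by linarith)
    obtain ⟨r', hr', -⟩ := move t _ _ x y r ht hr
    exact le_csInf ⟨r', hr'⟩ fun r hr => near₂ t x y r ht hr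
  have sub : ∀ s t, 0 ≤ s → 0 ≤ t → g (s + t) ≤ g s + g t := by
    intro s t hs ht
    have h1 : ∀ r ∈ S s x₀ x₀, g (s + t) - r ≤ g t := fun r hr =>
      le_csInf (ne t ht) fun r' hr' => by
        have := csInf_le (bdd (s + t) x₀ x₀ (by linarith)) (concat _ _ _ _ _ _ _ hs ht hr hr')
        simp only [hg]
        linarith
    have : g (s + t) - g t ≤ g s := le_csInf (ne s hs) fun r hr => by
      have := h1 r hr
      linarith
    linarith
  have sup : ∀ s t, N + N ≤ s → N + N ≤ t → g s + g t - (D + D) ≤ g (s + t) := by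
    intro s t hs ht
    refine le_csInf (ne _ (by linarith)) fun r hr => ?_
    obtain ⟨z, r₁, hr₁, r₂, hr₂, rfl⟩ := split _ _ _ _ _ (by linarith) (by linarith) hr
    have := near₂ _ _ _ _ hs hr₁
    have := near₂ _ _ _ _ ht hr₂
    linarith
  have up : ∀ t, 0 ≤ t → g t ≤ C * t := by
    intro t ht
    obtain ⟨r, hr, h⟩ := stay t x₀ ht
    exact (csInf_le (bdd t x₀ x₀ ht) hr).trans h
  have rate := fun s t => rate_le_rate (g := g) (s := s) (t := t)
    (by linarith : 0 < N + N) sub sup up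
  set Q : Set ℝ := (fun s => (g s - (D + D)) / s) '' Ici (N + N) with hQ
  have Qne : Q.Nonempty := ⟨_, N + N, self_mem_Ici, rfl⟩
  have Qle : ∀ t, N + N ≤ t → sSup Q ≤ g t / t := fun t ht =>
    csSup_le Qne (by rintro _ ⟨s, hs, rfl⟩; exact rate s t hs ht)
  have Qbdd : BddAbove Q := ⟨g (N + N) / (N + N), by
    rintro _ ⟨s, hs, rfl⟩; exact rate s _ hs le_rfl⟩
  refine ⟨-sSup Q, |D| + |D| + |D|, N + N, fun t ht x y => ?_⟩
  have ht0 : 0 < t := by linarith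
  have h1 := Qle t ht
  have h2 : (g t - (D + D)) / t ≤ sSup Q := le_csSup Qbdd ⟨t, ht, rfl⟩
  rw [le_div_iff₀ ht0] at h1
  rw [div_le_iff₀ ht0] at h2
  have h3 := near₁ t x y ht
  have h4 := near₃ t x y ht
  have h5 := le_abs_self D
  have h6 := abs_nonneg D
  rw [abs_le]
  constructor <;> linarith

/-- The three asymptotic regimes follow from a bounded distance of `h_t` to `-c t`. -/
theorem TonelliLagrangian.isCriticalValue_of_bound {Γ : MetricGraph} (Λ : TonelliLagrangian Γ)
    {c D T : ℝ} (h : ∀ t, T ≤ t → ∀ x y, |Λ.ht t x y + c * t| ≤ D) : Λ.IsCriticalValue c := by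
  refine ⟨fun k hk x y => ?_, fun k hk x y => ?_, fun x y => ?_⟩
  · refine Tendsto.liminf_eq (EReal.tendsto_coe_nhds_top_iff.2 ?_)
    have h1 : Tendsto (fun t : ℝ => (k - c) * t + -D) atTop atTop :=
      tendsto_atTop_add_const_right _ _ (tendsto_id.const_mul_atTop (by linarith))
    refine tendsto_atTop_mono' _ ?_ h1
    filter_upwards [eventually_ge_atTop T] with t ht
    have := (abs_le.1 (h t ht x y)).1
    linarith
  · refine Tendsto.liminf_eq (EReal.tendsto_coe_nhds_bot_iff.2 ?_)
    have h1 : Tendsto (fun t : ℝ => (k - c) * t + D) atTop atBot :=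
      tendsto_atBot_add_const_right _ _ (tendsto_id.const_mul_atTop_of_neg (by linarith))
    refine tendsto_atBot_mono' _ ?_ h1
    filter_upwards [eventually_ge_atTop T] with t ht
    have := (abs_le.1 (h t ht x y)).2
    linarith
  · set u : ℝ → EReal := fun t => ((Λ.ht t x y + c * t : ℝ) : EReal) with hu
    have h1 : ((-D : ℝ) : EReal) ≤ liminf u atTop := by
      refine le_liminf_of_le (by isBoundedDefault) ?_
      filter_upwards [eventually_ge_atTop T] with t ht
      exact EReal.coe_le_coe_iff.2 (abs_le.1 (h t ht x y)).1
    have h2 : liminf u atTop ≤ ((D : ℝ) : EReal) := by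
      refine liminf_le_of_frequently_le' (Eventually.frequently ?_)
      filter_upwards [eventually_ge_atTop T] with t ht
      exact EReal.coe_le_coe_iff.2 (abs_le.1 (h t ht x y)).2
    exact ⟨(liminf u atTop).toReal, (EReal.coe_toReal
      (ne_top_of_le_ne_top (EReal.coe_ne_top D) h2)
      (ne_bot_of_le_ne_bot (EReal.coe_ne_bot (-D)) h1)).symm⟩

/-- existence of the critical value. -/
theorem exists_critical_value (Γ : MetricGraph) (Λ : TonelliLagrangian Γ) :
    ∃ c : ℝ, Λ.IsCriticalValue c := by
  obtain ⟨B, hB⟩ := Λ.exists_lower_bound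
  obtain ⟨A, hA⟩ := Λ.exists_upper_bound
  obtain ⟨N, hN, hchain⟩ := Γ.exists_uniform_chain
  obtain ⟨j⟩ := Γ.neE
  have : Nonempty Γ.G := ⟨Γ.σ j 0⟩
  obtain ⟨c, D, T, h⟩ := exists_linear_rate Λ.actionSet (N := N) (A := A * N) (B := B) (C := A)
    (Nat.cast_pos.2 hN)
    (fun t x y r ht hr => Λ.le_of_mem_actionSet hB ht hr)
    (fun s t x y z r r' hs ht h h' => Λ.actionSet_concat hs ht h h')
    (fun s t x z r hs ht h => Λ.actionSet_split hs ht h)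
    (fun x y => Λ.actionSet_chain hA N (hchain x y))
    (fun t x ht => Λ.actionSet_const hA ht x)
  exact ⟨c, Λ.isCriticalValue_of_bound h⟩
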